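/- arXiv:2207.07416 — 6 statements merged into one kernel-verified Lean document; each statement's English description precedes it below -/
import Mathlib

section
/- Neither the formula ¬c p →c (q →i ¬c p) nor the formula ¬c p →i (q →i ¬c p) is valid in Kripke semantics: for each of the two formulas there exists a Kripke model and a world of it at which the formula is not satisfied. -/
/-- Formulas of the language L: propositional variables, falsum, conjunction,
disjunction, intuitionistic implication, and classical implication. -/
inductive Formula : Type
  | var : ℕ → Formula
  | bot : Formula
  | conj : Formula → Formula → Formula
  | disj : Formula → Formula → Formula
  | impi : Formula → Formula → Formula
  | impc : Formula → Formula → Formula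
/-- A Kripke model: nonempty set of worlds, a preorder, and a hereditary valuation. -/
structure KripkeModel where
  W : Type
  nonempty : Nonempty W
  R : W → W → Prop
  refl : ∀ w, R w w
  trans : ∀ w v u, R w v → R v u → R w u
  V : ℕ → Set W
  heredity : ∀ p w v, w ∈ V p → R w v → v ∈ V p

/-- Satisfaction relation `w ⊨_M A`. -/
def sat (M : KripkeModel) : M.W → Formula → Prop
  | w, Formula.var p => w ∈ M.V p
  | _, Formula.bot => False
  | w, Formula.conj A B => sat M w A ∧ sat M w B
  | w, Formula.disj A B => sat M w A ∨ sat M w B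
  | w, Formula.impi A B => ∀ v, M.R w v → sat M v A → sat M v B
  | w, Formula.impc A B => sat M w A → sat M w B

/-- A formula is valid if it is satisfied at every world of every Kripke model. -/
def valid (A : Formula) : Prop := ∀ (M : KripkeModel) (w : M.W), sat M w A
/-- Classical negation: ¬c A := A →c ⊥. -/
def negc (A : Formula) : Formula := Formula.impc A Formula.bot

/-- Neither ¬c p →c (q →i ¬c p) nor ¬c p →i (q →i ¬c p) is valid: each fails
at some world of some Kripke model. -/
theorem per_instances_invalid :
    (∃ (M : KripkeModel) (w : M.W),
      ¬ sat M w (Formula.impc (negc (Formula.var 0))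
        (Formula.impi (Formula.var 1) (negc (Formula.var 0))))) ∧
    (∃ (M : KripkeModel) (w : M.W),
      ¬ sat M w (Formula.impi (negc (Formula.var 0))
        (Formula.impi (Formula.var 1) (negc (Formula.var 0))))) := by
  let M : KripkeModel :=
    { W := Bool
      nonempty := ⟨true⟩
      R := fun w v => w = true → v = true
      refl := fun _ h => h
      trans := fun _ _ _ h k x => k (h x)
      V := fun _ => {w | w = true}
      heredity := fun _ _ _ h k => k h }
  have h0 : sat M false (negc (Formula.var 0)) := fun h => Bool.false_ne_true h
  have h1 : sat M true (Formula.var 1) := rfl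
  have h2 : sat M true (Formula.var 0) := rfl
  refine ⟨⟨M, false, fun h => ?_⟩, ⟨M, false, fun h => ?_⟩⟩
  · exact h h0 true (fun _ => rfl) h1 h2
  · exact h false (fun x => x) h0 true (fun _ => rfl) h1 h2
end

section
/- Let A be a classical formula (i.e., A contains no occurrence of →i). Then A is a classical tautology (true under every two-valued Boolean valuation) if and only if A is 3-valid (1 ∈ v̄(A) for every three-valued valuation v). -/
/-- Classical formulas: those containing no occurrence of →i. -/
def isClassical : Formula → Prop
  | Formula.var _ => True
  | Formula.bot => True
  | Formula.conj A B => isClassical A ∧ isClassical B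
  | Formula.disj A B => isClassical A ∧ isClassical B
  | Formula.impi _ _ => False
  | Formula.impc A B => isClassical A ∧ isClassical B

/-- Two-valued Boolean valuation (⊥ false, ∧/∨ Boolean, →c material implication;
the value on →i is irrelevant for classical formulas). -/
def boolVal (b : ℕ → Bool) : Formula → Bool
  | Formula.var p => b p
  | Formula.bot => false
  | Formula.conj A B => boolVal b A && boolVal b B
  | Formula.disj A B => boolVal b A || boolVal b B
  | Formula.impi A B => !boolVal b A || boolVal b B
  | Formula.impc A B => !boolVal b A || boolVal b B

/-- A classical tautology: a classical formula true under every Boolean valuation. -/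
def Tautology (A : Formula) : Prop :=
  isClassical A ∧ ∀ b : ℕ → Bool, boolVal b A = true
/-- A three-valued valuation `v : Prop → {{1},{0,1},{0}}`, presented by the two
predicates `1 ∈ v(p)` and `0 ∈ v(p)`, at least one of which must hold. -/
structure Val3 where
  one : ℕ → Prop
  zero : ℕ → Prop
  nonempty : ∀ p, one p ∨ zero p

/-- The extension v̄ of a three-valued valuation to all formulas: `(tval v A).1`
means `1 ∈ v̄(A)` and `(tval v A).2` means `0 ∈ v̄(A)`. -/
def tval (v : Val3) : Formula → Prop × Prop
  | Formula.var p => (v.one p, v.zero p)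
  | Formula.bot => (False, True)
  | Formula.conj A B => ((tval v A).1 ∧ (tval v B).1, (tval v A).2 ∨ (tval v B).2)
  | Formula.disj A B => ((tval v A).1 ∨ (tval v B).1, (tval v A).2 ∧ (tval v B).2)
  | Formula.impi A B => (¬ (tval v A).1 ∨ (tval v B).1, (tval v A).1 ∧ (tval v B).2)
  | Formula.impc A B => ((tval v A).2 ∨ (tval v B).1, (tval v A).1 ∧ (tval v B).2)

/-- A formula is 3-valid if `1 ∈ v̄(A)` for every three-valued valuation. -/
def valid3 (A : Formula) : Prop := ∀ v : Val3, (tval v A).1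

/-- Every Boolean selection from a three-valued valuation is included in its extension. -/
theorem tval_of_boolVal (v : Val3) (b : ℕ → Bool)
    (h1 : ∀ p, b p = true → v.one p) (h0 : ∀ p, b p = false → v.zero p)
    (A : Formula) (hA : isClassical A) :
    (boolVal b A = true → (tval v A).1) ∧ (boolVal b A = false → (tval v A).2) := by
  induction A with
  | var p => exact ⟨h1 p, h0 p⟩
  | bot => simp [boolVal, tval]
  | impi A B _ _ => exact hA.elim
  | conj A B ihA ihB | disj A B ihA ihB | impc A B ihA ihB =>
    have a := ihA hA.1
    have c := ihB hA.2
    simp only [boolVal, tval]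
    cases hx : boolVal b A <;> cases hy : boolVal b B <;> simp_all

/-- The three-valued valuation induced by a Boolean one. -/
def boolToVal3 (b : ℕ → Bool) : Val3 where
  one p := b p = true
  zero p := b p = false
  nonempty p := by cases b p <;> simp

theorem tval_boolToVal3 (b : ℕ → Bool) (A : Formula) :
    ((tval (boolToVal3 b) A).1 ↔ boolVal b A = true) ∧
      ((tval (boolToVal3 b) A).2 ↔ boolVal b A = false) := by
  induction A with
  | var p => exact ⟨Iff.rfl, Iff.rfl⟩
  | bot => simp [boolVal, tval]
  | conj A B ihA ihB | disj A B ihA ihB | impi A B ihA ihB | impc A B ihA ihB =>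
    simp only [boolVal, tval, ihA.1, ihA.2, ihB.1, ihB.2]
    cases boolVal b A <;> cases boolVal b B <;> simp

/-- A classical formula is a classical tautology iff it is 3-valid. -/
theorem tautology_iff_valid3 (A : Formula) (hA : isClassical A) :
    (∀ b : ℕ → Bool, boolVal b A = true) ↔ valid3 A := by
  constructor
  · intro h v
    classical
    refine (tval_of_boolVal v (fun p => decide (v.one p)) ?_ ?_ A hA).1 (h _)
    · intro p hp
      exact of_decide_eq_true hp
    · intro p hp
      exact (v.nonempty p).resolve_left (of_decide_eq_false hp)
  · intro h b
    exact (tval_boolToVal3 b A).1.1 (h _)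
end

section
/- For all formulas A, B, C of L, the formula (A →i (B →c C)) →c ((A →i B) →c (A →i C)) is 3-valid. -/
/-- Every formula receives a nonempty value. -/
theorem tval_nonempty (v : Val3) (A : Formula) : (tval v A).1 ∨ (tval v A).2 := by
  induction A with
  | var p => exact v.nonempty p
  | bot => exact Or.inr trivial
  | conj A B hA hB => simp only [tval]; tauto
  | disj A B hA hB => simp only [tval]; tauto
  | impi A B hA hB => simp only [tval]; tauto
  | impc A B hA hB => simp only [tval]; tauto

/-- The axiom (CK) is 3-valid. -/
theorem ck_valid3 (A B C : Formula) :
    valid3 (Formula.impc (Formula.impi A (Formula.impc B C))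
      (Formula.impc (Formula.impi A B) (Formula.impi A C))) := by
  intro v
  have hB := tval_nonempty v B
  have hC := tval_nonempty v C
  simp only [tval]
  tauto
end

section
/- Soundness of (C+J)⁻ with respect to the three-valued semantics: every theorem of the Hilbert system (C+J)⁻ is 3-valid. -/
/-- Uniform substitution, extended homomorphically to all formulas. -/
def subst (σ : ℕ → Formula) : Formula → Formula
  | Formula.var p => σ p
  | Formula.bot => Formula.bot
  | Formula.conj A B => Formula.conj (subst σ A) (subst σ B)
  | Formula.disj A B => Formula.disj (subst σ A) (subst σ B)
  | Formula.impi A B => Formula.impi (subst σ A) (subst σ B)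
  | Formula.impc A B => Formula.impc (subst σ A) (subst σ B)
/-- Persistent formulas: ⊥, variables, formulas A →i B, closed under ∧ and ∨. -/
inductive Persistent : Formula → Prop
  | bot : Persistent Formula.bot
  | var (p : ℕ) : Persistent (Formula.var p)
  | impi (A B : Formula) : Persistent (Formula.impi A B)
  | conj {A B : Formula} : Persistent A → Persistent B → Persistent (Formula.conj A B)
  | disj {A B : Formula} : Persistent A → Persistent B → Persistent (Formula.disj A B)
/-- Theoremhood in the Hilbert system (C+J)⁻: axioms (CL), (CK), (ID), (CMP),
(PER) and rules (MPI), (RCN). -/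
inductive Thm : Formula → Prop
  | cl (A : Formula) (σ : ℕ → Formula) : Tautology A → Thm (subst σ A)
  | ck (A B C : Formula) :
      Thm (Formula.impc (Formula.impi A (Formula.impc B C))
        (Formula.impc (Formula.impi A B) (Formula.impi A C)))
  | id (A : Formula) : Thm (Formula.impi A A)
  | cmp (A B : Formula) : Thm (Formula.impc (Formula.impi A B) (Formula.impc A B))
  | per (A B : Formula) : Persistent A → Thm (Formula.impc A (Formula.impi B A))
  | mpi {A B : Formula} : Thm A → Thm (Formula.impi A B) → Thm B
  | rcn (B : Formula) {A : Formula} : Thm A → Thm (Formula.impi B A)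
open Classical in
/-- The Boolean valuation reading off `1 ∈ v̄(σ p)` is refined by the three-valued one. -/
theorem boolVal_tval (v : Val3) (σ : ℕ → Formula) (A : Formula) (hA : isClassical A) :
    (boolVal (fun p => decide (tval v (σ p)).1) A = true → (tval v (subst σ A)).1) ∧
    (boolVal (fun p => decide (tval v (σ p)).1) A = false → (tval v (subst σ A)).2) := by
  induction A with
  | var p =>
    have := tval_nonempty v (σ p)
    simp only [boolVal, subst, decide_eq_true_eq, decide_eq_false_iff_not]
    tauto
  | bot => simp [boolVal, subst, tval]
  | conj A B ihA ihB =>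
    obtain ⟨a1, a2⟩ := ihA hA.1
    obtain ⟨b1, b2⟩ := ihB hA.2
    simp only [boolVal, subst, tval]
    generalize boolVal _ A = x at *
    generalize boolVal _ B = y at *
    cases x <;> cases y <;> simp_all
  | disj A B ihA ihB =>
    obtain ⟨a1, a2⟩ := ihA hA.1
    obtain ⟨b1, b2⟩ := ihB hA.2
    simp only [boolVal, subst, tval]
    generalize boolVal _ A = x at *
    generalize boolVal _ B = y at *
    cases x <;> cases y <;> simp_all
  | impi A B ihA ihB => exact hA.elim
  | impc A B ihA ihB =>
    obtain ⟨a1, a2⟩ := ihA hA.1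
    obtain ⟨b1, b2⟩ := ihB hA.2
    simp only [boolVal, subst, tval]
    generalize boolVal _ A = x at *
    generalize boolVal _ B = y at *
    cases x <;> cases y <;> simp_all

/-- Soundness of (C+J)⁻ with respect to the three-valued semantics. -/
theorem soundness_three_valued (A : Formula) (h : Thm A) : valid3 A := by
  intro v
  induction h with
  | cl A σ hA => exact (boolVal_tval v σ A hA.1).1 (hA.2 _)
  | ck A B C =>
    have hB := tval_nonempty v B
    have hC := tval_nonempty v C
    simp only [tval]
    tauto
  | id A => simp only [tval]; tauto
  | cmp A B =>
    have hA := tval_nonempty v A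
    have hB := tval_nonempty v B
    simp only [tval]
    tauto
  | per A B _ =>
    have hA := tval_nonempty v A
    simp only [tval]
    tauto
  | mpi _ _ ih1 ih2 => simp only [tval] at ih2; tauto
  | rcn B _ ih => simp only [tval]; tauto
end

section
/- The formula (p ∧ (p →c q)) →i q is not a theorem of the Hilbert system (C+J)⁻. -/
/-- Invariant of theorems: an intuitionistic implication is good only if it is an instance
of (ID) or its consequent is good; variables are never good. -/
def GoodF : Formula → Prop
  | Formula.var _ => False
  | Formula.impi A B => A = B ∨ GoodF B
  | _ => True

theorem Thm.goodF {F : Formula} (h : Thm F) : GoodF F := by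
  induction h with
  | cl A σ hA =>
    cases A with
    | var p => exact absurd (hA.2 (fun _ => false)) (by simp [boolVal])
    | impi A B => exact hA.1.elim
    | bot => trivial
    | conj A B => trivial
    | disj A B => trivial
    | impc A B => trivial
  | ck A B C => trivial
  | id A => exact Or.inl rfl
  | cmp A B => trivial
  | per A B _ => trivial
  | mpi _ _ ihA ihAB =>
    rcases ihAB with h | h
    · exact h ▸ ihA
    · exact h
  | rcn B _ ih => exact Or.inr ih

/-- (p ∧ (p →c q)) →i q is not a theorem of (C+J)⁻. -/
theorem ppq_not_theorem :
    ¬ Thm (Formula.impi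
      (Formula.conj (Formula.var 0) (Formula.impc (Formula.var 0) (Formula.var 1)))
      (Formula.var 1)) := by
  intro h
  rcases h.goodF with h | h
  · cases h
  · exact h
end

section
/- Semantic incompleteness of (C+J)⁻: there exists a formula C of L such that C is valid in Kripke semantics (satisfied at every world of every Kripke model) but C is not a theorem of the Hilbert system (C+J)⁻. -/
/-- An invariant of theorems: a theorem `A →i B` has `A = B` or `B` again satisfies the
invariant, and a conjunction that is a theorem never has an `→i` formula as left conjunct. -/
def ThmInv : Formula → Prop
  | Formula.impi A B => A = B ∨ ThmInv B
  | Formula.conj A _ => ∀ X Y, A ≠ Formula.impi X Y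
  | _ => True

theorem inv_of_thm {A : Formula} (h : Thm A) : ThmInv A := by
  induction h with
  | cl A σ hA =>
    obtain ⟨hc, hv⟩ := hA
    cases A with
    | var p => have := hv (fun _ => false); simp [boolVal] at this
    | impi A B => exact hc.elim
    | conj A B =>
      intro X Y hXY
      cases A with
      | var p => have := hv (fun _ => false); simp [boolVal] at this
      | impi A B => exact hc.1.elim
      | _ => simp [subst] at hXY
    | _ => simp [subst, ThmInv]
  | ck => simp [ThmInv]
  | id A => exact Or.inl rfl
  | cmp => simp [ThmInv]
  | per => simp [ThmInv]
  | mpi _ _ ih1 ih2 =>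
    rcases ih2 with h | h
    · exact h ▸ ih1
    · exact h
  | rcn B _ ih => exact Or.inr ih

/-- Semantic incompleteness of (C+J)⁻: some formula is valid in Kripke
semantics but not a theorem of (C+J)⁻. -/
theorem cj_minus_incomplete : ∃ C : Formula, valid C ∧ ¬ Thm C := by
  refine ⟨Formula.conj (Formula.impi Formula.bot Formula.bot)
    (Formula.impi Formula.bot Formula.bot), ?_, ?_⟩
  · intro M w
    exact ⟨fun _ _ h => h, fun _ _ h => h⟩
  · intro h
    exact inv_of_thm h _ _ rfl
end
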